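/- Let (A, {Δ(λ)}) be a split quasi-hereditary algebra over a commutative Noetherian ring R with costandard modules {∇(λ)}. Then the modules {DΔ(λ) : λ ∈ Λ} are costandard modules for the split quasi-hereditary algebra (A^op, {D∇(λ)}). -/

import Mathlib

open scoped TensorProduct
open CategoryTheory

noncomputable section

section Core

variable (R : Type) [CommRing R] (A : Type) [Ring A] [Algebra R A]

/-- The action of `a : A` on an `A`-module as an `R`-linear endomorphism. -/
def actL (M : Type) [AddCommGroup M] [Module R M] [Module A M] [IsScalarTower R A M]
    (a : A) : M →ₗ[R] M where
  toFun m := a • m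
  map_add' := smul_add a
  map_smul' r m := (smul_comm r a m).symm

/-- The right `A`-module (i.e. `Aᵐᵒᵖ`-module) structure on the `R`-linear dual of a left
`A`-module `M`, given by `(aᵒᵖ • f) m = f (a • m)`. -/
instance dualModule (M : Type) [AddCommGroup M] [Module R M] [Module A M]
    [IsScalarTower R A M] : Module Aᵐᵒᵖ (M →ₗ[R] R) where
  smul a f := f.comp (actL R A M a.unop)
  one_smul f := by ext m; show f ((1 : Aᵐᵒᵖ).unop • m) = f m; simp
  mul_smul a b f := by
    ext m
    show f ((a * b).unop • m) = f (b.unop • a.unop • m)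
    simp [mul_smul]
  smul_zero a := rfl
  smul_add a f g := rfl
  add_smul a b f := by
    ext m
    show f ((a + b).unop • m) = f (a.unop • m) + f (b.unop • m)
    simp [add_smul]
  zero_smul f := by ext m; show f ((0 : Aᵐᵒᵖ).unop • m) = 0; simp

@[simp] lemma dualModule_smul_apply (M : Type) [AddCommGroup M] [Module R M] [Module A M]
    [IsScalarTower R A M] (a : Aᵐᵒᵖ) (f : M →ₗ[R] R) (m : M) :
    (a • f) m = f (a.unop • m) := rfl

instance dualTower (M : Type) [AddCommGroup M] [Module R M] [Module A M]
    [IsScalarTower R A M] : IsScalarTower R Aᵐᵒᵖ (M →ₗ[R] R) := by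
  constructor
  intro r a f
  ext m
  show f ((r • a).unop • m) = r • f (a.unop • m)
  rw [MulOpposite.unop_smul, smul_assoc, map_smul]

/-- The left `A`-module structure on the `R`-linear dual of a right `A`-module
(i.e. an `Aᵐᵒᵖ`-module) `M`, given by `(a • f) m = f (aᵒᵖ • m)`. -/
instance dualModule' (M : Type) [AddCommGroup M] [Module R M] [Module Aᵐᵒᵖ M]
    [IsScalarTower R Aᵐᵒᵖ M] : Module A (M →ₗ[R] R) where
  smul a f := f.comp (actL R Aᵐᵒᵖ M (MulOpposite.op a))
  one_smul f := by ext m; show f (MulOpposite.op (1 : A) • m) = f m; simp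
  mul_smul a b f := by
    ext m
    show f (MulOpposite.op (a * b) • m) = f (MulOpposite.op b • MulOpposite.op a • m)
    rw [MulOpposite.op_mul, mul_smul]
  smul_zero a := rfl
  smul_add a f g := rfl
  add_smul a b f := by
    ext m
    show f (MulOpposite.op (a + b) • m) = f (MulOpposite.op a • m) + f (MulOpposite.op b • m)
    rw [MulOpposite.op_add, add_smul, map_add]
  zero_smul f := by ext m; show f (MulOpposite.op (0 : A) • m) = 0; simp

@[simp] lemma dualModule'_smul_apply (M : Type) [AddCommGroup M] [Module R M] [Module Aᵐᵒᵖ M]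
    [IsScalarTower R Aᵐᵒᵖ M] (a : A) (f : M →ₗ[R] R) (m : M) :
    (a • f) m = f (MulOpposite.op a • m) := rfl

instance dualTower' (M : Type) [AddCommGroup M] [Module R M] [Module Aᵐᵒᵖ M]
    [IsScalarTower R Aᵐᵒᵖ M] : IsScalarTower R A (M →ₗ[R] R) := by
  constructor
  intro r a f
  ext m
  show f (MulOpposite.op (r • a) • m) = r • f (MulOpposite.op a • m)
  rw [MulOpposite.op_smul, smul_assoc, map_smul]

variable (Λ : Type) [Fintype Λ] [PartialOrder Λ]

/-- Data witnessing that `X` is isomorphic to `Δ(λ) ⊗_R U` for some `λ ∈ S` and some finitely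
generated projective `R`-module `U`. -/
structure TensorFactor (Δ : Λ → Type) [∀ l, AddCommGroup (Δ l)] [∀ l, Module R (Δ l)]
    [∀ l, Module A (Δ l)] [∀ l, IsScalarTower R A (Δ l)]
    (S : Set Λ) (X : Type) [AddCommGroup X] [Module A X] : Type 1 where
  lam : Λ
  mem : lam ∈ S
  U : ModuleCat.{0} R
  fin : Module.Finite R U
  proj : Module.Projective R U
  iso : X ≃ₗ[A] (TensorProduct R (Δ lam) U)

/-- `M` belongs to `F(Δ̃_S)`: it is a finitely generated `A`-module with a finite filtration
whose factors are of the form `Δ(λ) ⊗_R U`, `λ ∈ S`, `U` a finitely generated projective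
`R`-module. -/
def InFilt (Δ : Λ → Type) [∀ l, AddCommGroup (Δ l)] [∀ l, Module R (Δ l)]
    [∀ l, Module A (Δ l)] [∀ l, IsScalarTower R A (Δ l)]
    (S : Set Λ) (M : Type) [AddCommGroup M] [Module A M] : Prop :=
  Module.Finite A M ∧
  ∃ (n : ℕ) (c : Fin (n + 1) → Submodule A M), c 0 = ⊥ ∧ c (Fin.last n) = ⊤ ∧ Monotone c ∧
    ∀ i : Fin n, Nonempty (TensorFactor R A Λ Δ S
      (↥(c i.succ) ⧸ (Submodule.comap (c i.succ).subtype (c i.castSucc))))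

/-- Data witnessing that `X` is isomorphic to `F(λ)` for some `λ ∈ S`. -/
structure PlainFactor (F : Λ → Type) [∀ l, AddCommGroup (F l)] [∀ l, Module A (F l)]
    (S : Set Λ) (X : Type) [AddCommGroup X] [Module A X] : Type 1 where
  lam : Λ
  mem : lam ∈ S
  iso : X ≃ₗ[A] F lam

/-- `M` has a finite filtration with factors among the modules `F(λ)`, `λ ∈ S`. -/
def InFiltPlain (F : Λ → Type) [∀ l, AddCommGroup (F l)] [∀ l, Module A (F l)]
    (S : Set Λ) (M : Type) [AddCommGroup M] [Module A M] : Prop :=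
  Module.Finite A M ∧
  ∃ (n : ℕ) (c : Fin (n + 1) → Submodule A M), c 0 = ⊥ ∧ c (Fin.last n) = ⊤ ∧ Monotone c ∧
    ∀ i : Fin n, Nonempty (PlainFactor A Λ F S
      (↥(c i.succ) ⧸ (Submodule.comap (c i.succ).subtype (c i.castSucc))))

/-- `X` is a direct summand of `Y` (as `A`-modules). -/
def IsDirectSummand (X Y : Type) [AddCommGroup X] [Module A X] [AddCommGroup Y]
    [Module A Y] : Prop :=
  ∃ (i : X →ₗ[A] Y) (p : Y →ₗ[A] X), p.comp i = LinearMap.id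

/-- `X` belongs to the additive closure `add T`. -/
def InAdd (T : Type) [AddCommGroup T] [Module A T] (X : Type) [AddCommGroup X]
    [Module A X] : Prop :=
  ∃ n : ℕ, IsDirectSummand A X (Fin n → T)

/-- A split quasi-hereditary structure on the `R`-algebra `A` with standard modules
`Δ(λ)`, `λ ∈ Λ` (following Rouquier's module-theoretic definition). -/
structure SplitQH (Δ : Λ → Type) [∀ l, AddCommGroup (Δ l)] [∀ l, Module R (Δ l)]
    [∀ l, Module A (Δ l)] [∀ l, IsScalarTower R A (Δ l)] : Type 1 where
  algFin : Module.Finite R A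
  algProj : Module.Projective R A
  deltaFinA : ∀ l, Module.Finite A (Δ l)
  deltaFinR : ∀ l, Module.Finite R (Δ l)
  deltaProjR : ∀ l, Module.Projective R (Δ l)
  hom_le : ∀ l m : Λ, (∃ f : Δ l →ₗ[A] Δ m, f ≠ 0) → l ≤ m
  endIso : ∀ l, Nonempty ((Module.End A (Δ l)) ≃ₐ[R] R)
  P : Λ → ModuleCat.{0} A
  P_proj : ∀ l, Module.Projective A (P l)
  P_fin : ∀ l, Module.Finite A (P l)
  epi : ∀ l, (P l : Type) →ₗ[A] Δ l
  epi_surj : ∀ l, Function.Surjective (epi l)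
  ker_filt : ∀ l, InFilt R A Λ Δ {m | l < m} ↥(LinearMap.ker (epi l))
  add_gen : ∀ (Q : ModuleCat.{0} A), Module.Finite A Q → Module.Projective A Q →
    InAdd A (∀ l, (P l : Type)) Q

/-- Vanishing of `Ext^i_A(M, N)` (computed in the abelian category of `A`-modules). -/
def extVanish (M : Type) [AddCommGroup M] [Module A M] (N : Type) [AddCommGroup N]
    [Module A N] (i : ℕ) : Prop :=
  Subsingleton (((Ext ℤ (ModuleCat.{0} A) i).obj
    (Opposite.op (ModuleCat.of A M))).obj (ModuleCat.of A N))

/-- `∇` is a family of costandard modules for the split quasi-hereditary algebra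
`(A, {Δ(λ)})`: the `R`-linear duals `D∇(λ)` make `A^op` split quasi-hereditary (with the same
poset), and the `Ext`-orthogonality relations with the standard modules hold. -/
def IsCostandard (Δ : Λ → Type) [∀ l, AddCommGroup (Δ l)] [∀ l, Module R (Δ l)]
    [∀ l, Module A (Δ l)] [∀ l, IsScalarTower R A (Δ l)]
    (N : Λ → Type) [∀ l, AddCommGroup (N l)] [∀ l, Module R (N l)]
    [∀ l, Module A (N l)] [∀ l, IsScalarTower R A (N l)] : Prop :=
  Nonempty (SplitQH R Aᵐᵒᵖ Λ (fun l => (N l →ₗ[R] R))) ∧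
  (∀ l, Nonempty ((Δ l →ₗ[A] N l) ≃ₗ[R] R)) ∧
  (∀ l m, l ≠ m → ∀ f : Δ l →ₗ[A] N m, f = 0) ∧
  (∀ l m : Λ, ∀ i : ℕ, 0 < i → extVanish A (Δ l) (N m) i)

/-- A bundled family of costandard modules. -/
structure CostandardFamily (Δ : Λ → Type) [∀ l, AddCommGroup (Δ l)] [∀ l, Module R (Δ l)]
    [∀ l, Module A (Δ l)] [∀ l, IsScalarTower R A (Δ l)] : Type 1 where
  Nab : Λ → Type
  [acg : ∀ l, AddCommGroup (Nab l)]
  [modR : ∀ l, Module R (Nab l)]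
  [modA : ∀ l, Module A (Nab l)]
  [tower : ∀ l, IsScalarTower R A (Nab l)]
  cost : IsCostandard R A Λ Δ Nab

attribute [instance] CostandardFamily.acg CostandardFamily.modR CostandardFamily.modA
  CostandardFamily.tower

/-- `T` is a family of (partial) tilting modules forming a characteristic tilting module
`⊕ T(λ)`: each `T(λ)` admits an exact sequence `0 → Δ(λ) → T(λ) → X(λ) → 0` with
`X(λ) ∈ F(Δ̃_{μ<λ})` and an exact sequence `0 → Y(λ) → T(λ) → ∇(λ) → 0` with
`Y(λ) ∈ F(∇̃_{μ<λ})`. -/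
def IsCharTilting (Δ : Λ → Type) [∀ l, AddCommGroup (Δ l)] [∀ l, Module R (Δ l)]
    [∀ l, Module A (Δ l)] [∀ l, IsScalarTower R A (Δ l)]
    (N : Λ → Type) [∀ l, AddCommGroup (N l)] [∀ l, Module R (N l)]
    [∀ l, Module A (N l)] [∀ l, IsScalarTower R A (N l)]
    (T : Λ → Type) [∀ l, AddCommGroup (T l)] [∀ l, Module A (T l)] : Prop :=
  ∀ l : Λ,
    (∃ f : Δ l →ₗ[A] T l, Function.Injective f ∧
      InFilt R A Λ Δ {m | m < l} ((T l) ⧸ LinearMap.range f)) ∧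
    (∃ g : T l →ₗ[A] N l, Function.Surjective g ∧
      InFilt R A Λ N {m | m < l} ↥(LinearMap.ker g))

end Core

end

noncomputable section

lemma subsingleton_ext_iff_exists_factor {C : Type*} [Category* C] [Abelian C] [HasExt C]
    {X Y : C} (P : ProjectiveResolution X) (n : ℕ) :
    Subsingleton (Abelian.Ext X Y (n + 1)) ↔
      ∀ f : P.complex.X (n + 1) ⟶ Y, P.complex.d (n + 2) (n + 1) ≫ f = 0 →
        ∃ g : P.complex.X n ⟶ Y, P.complex.d (n + 1) n ≫ g = f := by
  constructor
  · intro h f hf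
    exact (P.extMk_eq_zero_iff f (n + 2) rfl hf n rfl).1 (Subsingleton.elim _ _)
  · intro h
    refine subsingleton_of_forall_eq 0 fun α => ?_
    obtain ⟨f, hf, rfl⟩ := P.extMk_surjective α (n + 2) rfl
    exact (P.extMk_eq_zero_iff f (n + 2) rfl hf n rfl).2 (h f hf)

lemma extVanish_succ_iff {A M N : Type} [Ring A] [AddCommGroup M] [Module A M]
    [AddCommGroup N] [Module A N] (n : ℕ) :
    extVanish A M N (n + 1) ↔
      Subsingleton (Abelian.Ext (ModuleCat.of A M) (ModuleCat.of A N) (n + 1)) := by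
  let P := projectiveResolution (ModuleCat.of A M)
  rw [subsingleton_ext_iff_exists_factor P, extVanish,
    ← ModuleCat.isZero_iff_subsingleton, (P.isoExt (n + 1) _).isZero_iff,
    ← HomologicalComplex.exactAt_iff_isZero_homology,
    HomologicalComplex.exactAt_iff' _ n (n + 1) (n + 2) (by simp) (by simp),
    ShortComplex.moduleCat_exact_iff]
  rfl

section ExtLemmas

variable {C : Type*} [Category* C] [Abelian C] [HasExt C] {S : ShortComplex C}

lemma exists_extension_of_subsingleton_ext (hS : S.ShortExact) {Y : C}
    [Subsingleton (Abelian.Ext S.X₃ Y 1)] (f : S.X₁ ⟶ Y) : ∃ g : S.X₂ ⟶ Y, S.f ≫ g = f := by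
  obtain ⟨x, hx⟩ := Abelian.Ext.contravariant_sequence_exact₁ hS Y (Abelian.Ext.mk₀ f)
    (add_zero 1) (Subsingleton.elim _ _)
  obtain ⟨g, rfl⟩ := (Abelian.Ext.mk₀_bijective S.X₂ Y).2 x
  rw [Abelian.Ext.mk₀_comp_mk₀] at hx
  exact ⟨g, (Abelian.Ext.mk₀_bijective S.X₁ Y).1 hx⟩

lemma subsingleton_ext_one_of_extension (hS : S.ShortExact) {Y : C}
    [Subsingleton (Abelian.Ext S.X₂ Y 1)] (h : ∀ f : S.X₁ ⟶ Y, ∃ g : S.X₂ ⟶ Y, S.f ≫ g = f) :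
    Subsingleton (Abelian.Ext S.X₃ Y 1) := by
  refine subsingleton_of_forall_eq 0 fun x => ?_
  obtain ⟨y, rfl⟩ := Abelian.Ext.contravariant_sequence_exact₃ hS Y x
    (Subsingleton.elim _ _) (add_zero 1)
  obtain ⟨f, rfl⟩ := (Abelian.Ext.mk₀_bijective S.X₁ Y).2 y
  obtain ⟨g, rfl⟩ := h f
  rw [← Abelian.Ext.mk₀_comp_mk₀]
  exact ShortComplex.ShortExact.extClass_comp_assoc hS _

lemma subsingleton_ext_one_of_lift (hS : S.ShortExact) {X : C}
    [Subsingleton (Abelian.Ext X S.X₂ 1)] (h : ∀ f : X ⟶ S.X₃, ∃ g : X ⟶ S.X₂, g ≫ S.g = f) :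
    Subsingleton (Abelian.Ext X S.X₁ 1) := by
  refine subsingleton_of_forall_eq 0 fun x => ?_
  obtain ⟨y, rfl⟩ := Abelian.Ext.covariant_sequence_exact₁ X hS x
    (Subsingleton.elim _ _) (zero_add 1)
  obtain ⟨f, rfl⟩ := (Abelian.Ext.mk₀_bijective X S.X₃).2 y
  obtain ⟨g, rfl⟩ := h f
  rw [← Abelian.Ext.mk₀_comp_mk₀, Abelian.Ext.comp_assoc_of_second_deg_zero,
    ShortComplex.ShortExact.comp_extClass, Abelian.Ext.comp_zero]

lemma subsingleton_ext_X₁_contravariant (hS : S.ShortExact) {Y : C} (n : ℕ)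
    [Subsingleton (Abelian.Ext S.X₂ Y n)] [Subsingleton (Abelian.Ext S.X₃ Y (n + 1))] :
    Subsingleton (Abelian.Ext S.X₁ Y n) := by
  refine subsingleton_of_forall_eq 0 fun x => ?_
  obtain ⟨y, rfl⟩ := Abelian.Ext.contravariant_sequence_exact₁ hS Y x (add_comm 1 n)
    (Subsingleton.elim _ _)
  rw [Subsingleton.elim y 0, Abelian.Ext.comp_zero]

lemma subsingleton_ext_X₂_contravariant (hS : S.ShortExact) {Y : C} (n : ℕ)
    [Subsingleton (Abelian.Ext S.X₁ Y n)] [Subsingleton (Abelian.Ext S.X₃ Y n)] :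
    Subsingleton (Abelian.Ext S.X₂ Y n) := by
  refine subsingleton_of_forall_eq 0 fun x => ?_
  obtain ⟨y, rfl⟩ := Abelian.Ext.contravariant_sequence_exact₂ hS Y x (Subsingleton.elim _ _)
  rw [Subsingleton.elim y 0, Abelian.Ext.comp_zero]

lemma subsingleton_ext_X₃_contravariant (hS : S.ShortExact) {Y : C} (n : ℕ)
    [Subsingleton (Abelian.Ext S.X₁ Y n)] [Subsingleton (Abelian.Ext S.X₂ Y (n + 1))] :
    Subsingleton (Abelian.Ext S.X₃ Y (n + 1)) := by
  refine subsingleton_of_forall_eq 0 fun x => ?_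
  obtain ⟨y, rfl⟩ := Abelian.Ext.contravariant_sequence_exact₃ hS Y x
    (Subsingleton.elim _ _) (add_comm 1 n)
  rw [Subsingleton.elim y 0, Abelian.Ext.comp_zero]

lemma subsingleton_ext_X₁_covariant (hS : S.ShortExact) {X : C} (n : ℕ)
    [Subsingleton (Abelian.Ext X S.X₃ n)] [Subsingleton (Abelian.Ext X S.X₂ (n + 1))] :
    Subsingleton (Abelian.Ext X S.X₁ (n + 1)) := by
  refine subsingleton_of_forall_eq 0 fun x => ?_
  obtain ⟨y, rfl⟩ := Abelian.Ext.covariant_sequence_exact₁ X hS x (Subsingleton.elim _ _) rfl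
  rw [Subsingleton.elim y 0, Abelian.Ext.zero_comp]

lemma subsingleton_ext_of_sum_factor {ι : Type*} [Fintype ι] {X Y : C} {Z : ι → C} (n : ℕ)
    (p : ∀ k, X ⟶ Z k) (i : ∀ k, Z k ⟶ X) (h : ∑ k, p k ≫ i k = 𝟙 X)
    [∀ k, Subsingleton (Abelian.Ext (Z k) Y n)] : Subsingleton (Abelian.Ext X Y n) := by
  refine subsingleton_of_forall_eq 0 fun x => ?_
  rw [← Abelian.Ext.mk₀_id_comp x, ← h, Abelian.Ext.mk₀_sum, Abelian.Ext.sum_comp]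
  refine Finset.sum_eq_zero fun k _ => ?_
  rw [← Abelian.Ext.mk₀_comp_mk₀, Abelian.Ext.comp_assoc_of_second_deg_zero,
    Subsingleton.elim ((Abelian.Ext.mk₀ (i k)).comp x _) 0, Abelian.Ext.comp_zero]

end ExtLemmas

section Duality

variable (R : Type) [CommRing R] {A : Type} [Ring A] [Algebra R A]

section Maps

variable {M N : Type} [AddCommGroup M] [Module R M] [Module A M] [IsScalarTower R A M]
  [AddCommGroup N] [Module R N] [Module A N] [IsScalarTower R A N]

/-- The transpose of an `A`-linear map, as a map of right `A`-modules. -/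
def transpose (f : M →ₗ[A] N) : (N →ₗ[R] R) →ₗ[Aᵐᵒᵖ] (M →ₗ[R] R) where
  toFun φ := φ.comp (f.restrictScalars R)
  map_add' _ _ := rfl
  map_smul' a φ := by ext m; simp

/-- Left `A`-linear maps from `M` to the dual of a right `A`-module `Z` correspond to right
`A`-linear maps from `Z` to the dual of `M`. -/
def homDualFlip (M Z : Type) [AddCommGroup M] [Module R M] [Module A M] [IsScalarTower R A M]
    [AddCommGroup Z] [Module R Z] [Module Aᵐᵒᵖ Z] [IsScalarTower R Aᵐᵒᵖ Z] :
    (Z →ₗ[Aᵐᵒᵖ] (M →ₗ[R] R)) ≃ₗ[R] (M →ₗ[A] (Z →ₗ[R] R)) where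
  toFun f :=
    { toFun := (f.restrictScalars R).flip
      map_add' := map_add _
      map_smul' := fun a m => by ext z; simp }
  invFun g :=
    { toFun := (g.restrictScalars R).flip
      map_add' := map_add _
      map_smul' := fun a m => by ext z; simp }
  map_add' _ _ := rfl
  map_smul' _ _ := rfl
  left_inv _ := rfl
  right_inv _ := rfl

/-- The transpose of a map of right `A`-modules, as a map of left `A`-modules. -/
def transposeOp {Z W : Type} [AddCommGroup Z] [Module R Z] [Module Aᵐᵒᵖ Z] [IsScalarTower R Aᵐᵒᵖ Z]
    [AddCommGroup W] [Module R W] [Module Aᵐᵒᵖ W] [IsScalarTower R Aᵐᵒᵖ W]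
    (f : Z →ₗ[Aᵐᵒᵖ] W) : (W →ₗ[R] R) →ₗ[A] (Z →ₗ[R] R) where
  toFun φ := φ.comp (f.restrictScalars R)
  map_add' _ _ := rfl
  map_smul' a φ := by ext m; simp

end Maps

lemma exists_retraction_ker {M N : Type} [AddCommGroup M] [Module R M] [Module A M]
    [IsScalarTower R A M] [AddCommGroup N] [Module R N] [Module A N] [IsScalarTower R A N]
    [Module.Projective R N] {q : M →ₗ[A] N} (hq : Function.Surjective q) :
    ∃ r : M →ₗ[R] LinearMap.ker q,
      r.comp ((LinearMap.ker q).subtype.restrictScalars R) = LinearMap.id := by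
  obtain ⟨s, hs⟩ := Module.projective_lifting_property (q.restrictScalars R) LinearMap.id hq
  have hs' : ∀ x, q (s x) = x := fun x => LinearMap.congr_fun hs x
  refine ⟨{ toFun := fun x => ⟨x - s (q x), by simp [hs']⟩, map_add' := ?_, map_smul' := ?_ }, ?_⟩
  · intro x y
    ext
    simp
    abel
  · intro c x
    ext
    have : q (c • x) = c • q x := (q.restrictScalars R).map_smul c x
    simp [this, smul_sub]
  · ext x
    have : q x = 0 := x.2
    simp [this]

lemma projective_ker {M N : Type} [AddCommGroup M] [Module R M] [Module A M]
    [IsScalarTower R A M] [AddCommGroup N] [Module R N] [Module A N] [IsScalarTower R A N]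
    [Module.Projective R M] [Module.Projective R N] {q : M →ₗ[A] N}
    (hq : Function.Surjective q) : Module.Projective R (LinearMap.ker q) := by
  obtain ⟨r, hr⟩ := exists_retraction_ker R hq
  exact Module.Projective.of_split _ r hr

variable (A) in
/-- The canonical map onto a module from the free module on its elements. -/
def freeCover (M : Type) [AddCommGroup M] [Module A M] : (M →₀ A) →ₗ[A] M :=
  Finsupp.linearCombination A id

instance projective_finsupp_of_projective (ι M : Type) [AddCommGroup M] [Module R M]
    [Module.Projective R M] : Module.Projective R (ι →₀ M) := by
  classical exact .of_equiv (finsuppLequivDFinsupp R (ι := ι) (M := M)).symm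

lemma freeCover_surjective (M : Type) [AddCommGroup M] [Module A M] :
    Function.Surjective (freeCover A M) :=
  fun m => ⟨Finsupp.single m 1, by simp [freeCover]⟩

lemma shortExact_of_linearMap {M N P : Type} [AddCommGroup M] [Module A M] [AddCommGroup N]
    [Module A N] [AddCommGroup P] [Module A P] {f : M →ₗ[A] N} {g : N →ₗ[A] P}
    (hf : Function.Injective f) (hg : Function.Surjective g) (h : Function.Exact f g) :
    (ShortComplex.mk (ModuleCat.ofHom f) (ModuleCat.ofHom g)
      (by ext x; exact h.apply_apply_eq_zero x)).ShortExact where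
  exact := (ShortComplex.ShortExact.moduleCat_exact_iff_function_exact _).2 h
  mono_f := (ModuleCat.mono_iff_injective _).2 hf
  epi_g := (ModuleCat.epi_iff_surjective _).2 hg

lemma shortExact_transpose {M N : Type} [AddCommGroup M] [Module R M] [Module A M]
    [IsScalarTower R A M] [AddCommGroup N] [Module R N] [Module A N] [IsScalarTower R A N]
    [Module.Projective R N] {q : M →ₗ[A] N} (hq : Function.Surjective q) :
    (ShortComplex.mk (ModuleCat.ofHom (transpose R q))
      (ModuleCat.ofHom (transpose R (LinearMap.ker q).subtype))
      (by ext φ x; exact (congrArg φ x.2).trans φ.map_zero)).ShortExact := by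
  obtain ⟨s, hs⟩ := Module.projective_lifting_property (q.restrictScalars R) LinearMap.id hq
  obtain ⟨r, hr⟩ := exists_retraction_ker R hq
  refine shortExact_of_linearMap (f := transpose R q)
    (g := transpose R (LinearMap.ker q).subtype) ?_ ?_ ?_
  · intro φ ψ h
    ext x
    obtain ⟨y, rfl⟩ := hq x
    exact LinearMap.congr_fun h y
  · exact fun φ => ⟨φ.comp r, by ext x; exact congrArg φ (LinearMap.congr_fun hr x)⟩
  · intro φ
    refine ⟨fun h => ⟨φ.comp s, ?_⟩, ?_⟩
    · ext x
      have hx : q (s (q x) - x) = 0 := by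
        rw [map_sub, sub_eq_zero]; exact LinearMap.congr_fun hs (q x)
      have := LinearMap.congr_fun h ⟨_, hx⟩
      exact sub_eq_zero.1 ((map_sub φ _ _).symm.trans this)
    · rintro ⟨ψ, rfl⟩
      ext x
      exact (congrArg ψ x.2).trans ψ.map_zero

lemma transpose_comp_homDualFlip_symm {M N Z : Type} [AddCommGroup M] [Module R M] [Module A M]
    [IsScalarTower R A M] [AddCommGroup N] [Module R N] [Module A N] [IsScalarTower R A N]
    [AddCommGroup Z] [Module R Z] [Module Aᵐᵒᵖ Z] [IsScalarTower R Aᵐᵒᵖ Z]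
    {i : N →ₗ[A] M} {g : M →ₗ[A] (Z →ₗ[R] R)} {f : Z →ₗ[Aᵐᵒᵖ] (N →ₗ[R] R)}
    (h : g.comp i = homDualFlip R N Z f) :
    (transpose R i).comp ((homDualFlip R M Z).symm g) = f :=
  LinearMap.ext fun x => LinearMap.ext fun y => LinearMap.congr_fun (LinearMap.congr_fun h y) x

lemma exists_extension_to_dual {P Z W : Type} [AddCommGroup P] [Module R P] [Module A P]
    [IsScalarTower R A P] [Module.Projective A P] [AddCommGroup Z] [Module R Z] [Module Aᵐᵒᵖ Z]
    [IsScalarTower R Aᵐᵒᵖ Z] [Module.Projective R Z] [AddCommGroup W] [Module R W] [Module Aᵐᵒᵖ W]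
    [IsScalarTower R Aᵐᵒᵖ W] {q : W →ₗ[Aᵐᵒᵖ] Z} (hq : Function.Surjective q)
    (f : LinearMap.ker q →ₗ[Aᵐᵒᵖ] (P →ₗ[R] R)) :
    ∃ g : W →ₗ[Aᵐᵒᵖ] (P →ₗ[R] R), g.comp (LinearMap.ker q).subtype = f := by
  obtain ⟨r, hr⟩ := exists_retraction_ker R hq
  have hsurj : Function.Surjective
      (transposeOp R (A := A) (Z := LinearMap.ker q) (LinearMap.ker q).subtype) :=
    fun φ => ⟨φ.comp r, LinearMap.ext fun x => congrArg φ (LinearMap.congr_fun hr x)⟩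
  obtain ⟨g, hg⟩ := Module.projective_lifting_property
    (transposeOp R (A := A) (Z := LinearMap.ker q) (LinearMap.ker q).subtype)
    (homDualFlip R P (LinearMap.ker q) f) hsurj
  exact ⟨(homDualFlip R P _).symm g, LinearMap.ext fun x => LinearMap.ext fun y =>
    LinearMap.congr_fun (LinearMap.congr_fun hg y) x⟩

/-- The dual of a projective module is `Ext`-acyclic for modules which are projective over the base
ring. -/
lemma subsingleton_ext_dual_free [Module.Projective R A] {P : Type} [AddCommGroup P] [Module R P]
    [Module A P] [IsScalarTower R A P] [Module.Projective A P] (n : ℕ)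
    (Z : Type) [AddCommGroup Z] [Module R Z] [Module Aᵐᵒᵖ Z] [IsScalarTower R Aᵐᵒᵖ Z]
    [Module.Projective R Z] :
    Subsingleton (Abelian.Ext (ModuleCat.of Aᵐᵒᵖ Z) (ModuleCat.of Aᵐᵒᵖ (P →ₗ[R] R)) (n + 1)) := by
  have : Module.Projective R Aᵐᵒᵖ := .of_equiv (MulOpposite.opLinearEquiv R)
  induction n generalizing Z with
  | zero =>
    let q := freeCover Aᵐᵒᵖ Z
    have hq : Function.Surjective q := freeCover_surjective Z
    have hS := LinearMap.shortExact_shortComplexKer hq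
    have : Projective (q.shortComplexKer).X₂ :=
      (IsProjective.iff_projective (Z →₀ Aᵐᵒᵖ)).1 inferInstance
    have : Module.Projective R (LinearMap.ker q) := projective_ker R hq
    have := Abelian.Ext.subsingleton_of_projective q.shortComplexKer.X₂
      (ModuleCat.of Aᵐᵒᵖ (P →ₗ[R] R)) 0
    refine subsingleton_ext_one_of_extension hS fun f => ?_
    obtain ⟨g, hg⟩ := exists_extension_to_dual R hq f.hom
    exact ⟨ModuleCat.ofHom g, ModuleCat.hom_ext hg⟩
  | succ n ih =>
    let q := freeCover Aᵐᵒᵖ Z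
    have hq : Function.Surjective q := freeCover_surjective Z
    have hS := LinearMap.shortExact_shortComplexKer hq
    have : Projective (q.shortComplexKer).X₂ :=
      (IsProjective.iff_projective (Z →₀ Aᵐᵒᵖ)).1 inferInstance
    have : Module.Projective R (LinearMap.ker q) := projective_ker R hq
    have := Abelian.Ext.subsingleton_of_projective q.shortComplexKer.X₂
      (ModuleCat.of Aᵐᵒᵖ (P →ₗ[R] R)) (n + 1)
    have := ih (LinearMap.ker q)
    exact subsingleton_ext_X₃_contravariant hS (n + 1)

/-- Vanishing of `Ext` is preserved by duality, for modules projective over the base ring. -/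
lemma subsingleton_ext_dual [Module.Projective R A] (n : ℕ)
    (Z : Type) [AddCommGroup Z] [Module R Z] [Module Aᵐᵒᵖ Z] [IsScalarTower R Aᵐᵒᵖ Z]
    [Module.Projective R Z] (M : Type) [AddCommGroup M] [Module R M] [Module A M]
    [IsScalarTower R A M] [Module.Projective R M]
    (h : Subsingleton (Abelian.Ext (ModuleCat.of A M) (ModuleCat.of A (Z →ₗ[R] R)) (n + 1))) :
    Subsingleton (Abelian.Ext (ModuleCat.of Aᵐᵒᵖ Z) (ModuleCat.of Aᵐᵒᵖ (M →ₗ[R] R)) (n + 1)) := by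
  induction n generalizing M with
  | zero =>
    have hq : Function.Surjective (freeCover A M) := freeCover_surjective M
    have hS := LinearMap.shortExact_shortComplexKer hq
    have hT := shortExact_transpose R hq
    have := subsingleton_ext_dual_free R (A := A) (P := M →₀ A) 0 Z
    refine subsingleton_ext_one_of_lift hT fun f => ?_
    obtain ⟨g, hg⟩ := exists_extension_of_subsingleton_ext hS
      (Y := ModuleCat.of A (Z →ₗ[R] R))
      (ModuleCat.ofHom (homDualFlip R (A := A) (LinearMap.ker (freeCover A M)) Z f.hom))
    exact ⟨ModuleCat.ofHom ((homDualFlip R (M →₀ A) Z).symm g.hom), ModuleCat.hom_ext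
      (transpose_comp_homDualFlip_symm R (congrArg ModuleCat.Hom.hom hg))⟩
  | succ n ih =>
    have hq : Function.Surjective (freeCover A M) := freeCover_surjective M
    have hS := LinearMap.shortExact_shortComplexKer hq
    have hT := shortExact_transpose R hq
    have := subsingleton_ext_dual_free R (A := A) (P := M →₀ A) (n + 1) Z
    have : Module.Projective R (LinearMap.ker (freeCover A M)) := projective_ker R hq
    have : Projective (freeCover A M).shortComplexKer.X₂ :=
      (IsProjective.iff_projective (M →₀ A)).1 inferInstance
    have := Abelian.Ext.subsingleton_of_projective (freeCover A M).shortComplexKer.X₂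
      (ModuleCat.of A (Z →ₗ[R] R)) n
    have := ih (LinearMap.ker (freeCover A M))
      (subsingleton_ext_X₁_contravariant hS (Y := ModuleCat.of A (Z →ₗ[R] R)) (n + 1))
    exact subsingleton_ext_X₁_covariant hT (n + 1)

end Duality

section HomLattice

variable (R : Type) [CommRing R] (A : Type) [Ring A] [Algebra R A]
  (N : Type) [AddCommGroup N] [Module R N] [Module A N] [IsScalarTower R A N]

/-- `Ext¹(X, N) = 0` and `Hom(X, N)` is a finitely generated projective `R`-module. -/
structure HomLattice (X : Type) [AddCommGroup X] [Module A X] : Prop where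
  ext : Subsingleton (Abelian.Ext (ModuleCat.of A X) (ModuleCat.of A N) 1)
  finite : Module.Finite R (X →ₗ[A] N)
  projective : Module.Projective R (X →ₗ[A] N)

variable {R A N}

lemma HomLattice.of_sum_factor {ι X : Type} [Fintype ι] {Z : ι → Type}
    [AddCommGroup X] [Module A X] [∀ k, AddCommGroup (Z k)] [∀ k, Module A (Z k)]
    (p : ∀ k, X →ₗ[A] Z k) (i : ∀ k, Z k →ₗ[A] X) (h : ∀ x, ∑ k, i k (p k x) = x)
    (hZ : ∀ k, HomLattice R A N (Z k)) : HomLattice R A N X := by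
  have := fun k => (hZ k).ext
  have := fun k => (hZ k).finite
  have := fun k => (hZ k).projective
  let s : (X →ₗ[A] N) →ₗ[R] (∀ k, Z k →ₗ[A] N) := LinearMap.pi fun k => LinearMap.lcomp R N (i k)
  let r : (∀ k, Z k →ₗ[A] N) →ₗ[R] (X →ₗ[A] N) :=
    ∑ k, (LinearMap.lcomp R N (p k)).comp (LinearMap.proj k)
  have hrs : r.comp s = LinearMap.id := by
    ext f x
    conv_rhs => rw [LinearMap.id_apply, ← h x, map_sum]
    simp [r, s]
  have : Module.Projective R (∀ k, Z k →ₗ[A] N) := by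
    classical exact .of_equiv (DFinsupp.linearEquivFunOnFintype (R := R))
  refine ⟨subsingleton_ext_of_sum_factor (Z := fun k => ModuleCat.of A (Z k)) 1
    (fun k => ModuleCat.ofHom (p k)) (fun k => ModuleCat.ofHom (i k)) ?_,
    .of_surjective r fun f => ⟨s f, LinearMap.congr_fun hrs f⟩, .of_split s r hrs⟩
  ext x
  simpa [ModuleCat.hom_sum] using h x

lemma HomLattice.of_split {X Y : Type} [AddCommGroup X] [Module A X] [AddCommGroup Y] [Module A Y]
    (i : X →ₗ[A] Y) (p : Y →ₗ[A] X) (h : p.comp i = LinearMap.id) (hY : HomLattice R A N Y) :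
    HomLattice R A N X :=
  .of_sum_factor (ι := Unit) (fun _ => i) (fun _ => p)
    (fun x => by simpa using LinearMap.congr_fun h x) fun _ => hY

lemma HomLattice.of_linearEquiv {X Y : Type} [AddCommGroup X] [Module A X] [AddCommGroup Y]
    [Module A Y] (e : X ≃ₗ[A] Y) (hY : HomLattice R A N Y) : HomLattice R A N X :=
  hY.of_split e.toLinearMap e.symm.toLinearMap (by ext; simp)

lemma HomLattice.pi {ι : Type} [Fintype ι] {Z : ι → Type} [∀ k, AddCommGroup (Z k)]
    [∀ k, Module A (Z k)] (hZ : ∀ k, HomLattice R A N (Z k)) : HomLattice R A N (∀ k, Z k) := by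
  classical
  exact .of_sum_factor (fun k => LinearMap.proj k) (fun k => LinearMap.single A Z k)
    (fun x => Finset.univ_sum_single x) hZ

lemma HomLattice.of_exact {X Y Z : Type} [AddCommGroup X] [Module A X] [AddCommGroup Y]
    [Module A Y] [AddCommGroup Z] [Module A Z] {f : X →ₗ[A] Y} {g : Y →ₗ[A] Z}
    (hf : Function.Injective f) (hg : Function.Surjective g) (h : Function.Exact f g)
    (hX : HomLattice R A N X) (hZ : HomLattice R A N Z) : HomLattice R A N Y := by
  have hS := shortExact_of_linearMap hf hg h
  have := hX.ext
  have := hZ.ext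
  have := hX.finite
  have := hZ.finite
  have := hX.projective
  have := hZ.projective
  have hsurj : Function.Surjective (LinearMap.lcomp R N f) := fun φ => by
    obtain ⟨ψ, hψ⟩ := exists_extension_of_subsingleton_ext hS
      (Y := ModuleCat.of A N) (ModuleCat.ofHom φ)
    exact ⟨ψ.hom, congrArg ModuleCat.Hom.hom hψ⟩
  obtain ⟨s, hs⟩ := Module.projective_lifting_property (LinearMap.lcomp R N f) LinearMap.id hsurj
  have hs' : ∀ φ x, s φ (f x) = φ x := fun φ x =>
    LinearMap.congr_fun (LinearMap.congr_fun hs φ) x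
  have hbij : Function.Bijective ((LinearMap.lcomp R N g).coprod s) := by
    constructor
    · rw [← LinearMap.ker_eq_bot, LinearMap.ker_eq_bot']
      rintro ⟨α, β⟩ hαβ
      have hαβ' : ∀ y, α (g y) + s β y = 0 := fun y => LinearMap.congr_fun hαβ y
      have hβ : β = 0 := by
        ext x
        simpa [hs', h.apply_apply_eq_zero] using hαβ' (f x)
      subst hβ
      have hα : α = 0 := by
        ext z
        obtain ⟨y, rfl⟩ := hg z
        simpa using hαβ' y
      rw [hα]
      rfl
    · intro φ
      let φ' := φ - s (LinearMap.lcomp R N f φ)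
      have hker : LinearMap.ker g ≤ LinearMap.ker φ' := by
        intro y hy
        obtain ⟨x, rfl⟩ := (h y).1 hy
        simp [φ', hs']
      obtain ⟨α, hα⟩ : ∃ α : Z →ₗ[A] N, α.comp g = φ' := by
        refine ⟨((LinearMap.ker g).liftQ φ' hker).comp
          (g.quotKerEquivOfSurjective hg).symm.toLinearMap, ?_⟩
        ext y
        have : (g.quotKerEquivOfSurjective hg).symm (g y) = (LinearMap.ker g).mkQ y := by
          rw [LinearEquiv.symm_apply_eq]; rfl
        simp [this]
      refine ⟨(α, LinearMap.lcomp R N f φ), ?_⟩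
      change α.comp g + _ = φ
      rw [hα]
      exact sub_add_cancel _ _
  let e := LinearEquiv.ofBijective _ hbij
  have : Subsingleton (Abelian.Ext (ModuleCat.of A Y) (ModuleCat.of A N) 1) :=
    subsingleton_ext_X₂_contravariant hS (Y := ModuleCat.of A N) 1
  exact ⟨this, .equiv e, .of_equiv e⟩

lemma HomLattice.tensor {X : Type} [AddCommGroup X] [Module R X] [Module A X]
    [IsScalarTower R A X] (hX : HomLattice R A N X) (U : Type) [AddCommGroup U] [Module R U]
    [Module.Finite R U] [Module.Projective R U] : HomLattice R A N (X ⊗[R] U) := by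
  obtain ⟨n, f, g, -, -, hfg⟩ := Module.Finite.exists_comp_eq_id_of_projective R U
  refine .of_sum_factor (ι := Fin n)
    (fun k => (TensorProduct.AlgebraTensorModule.rid R A X).toLinearMap.comp
      (TensorProduct.AlgebraTensorModule.map LinearMap.id ((LinearMap.proj k).comp g)))
    (fun k => (TensorProduct.AlgebraTensorModule.map LinearMap.id
      (LinearMap.toSpanSingleton R U (f (Pi.single k 1)))).comp
        (TensorProduct.AlgebraTensorModule.rid R A X).symm.toLinearMap) ?_ fun _ => hX
  intro t
  induction t with
  | zero => simp
  | add a b ha hb => simp only [map_add, Finset.sum_add_distrib, ha, hb]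
  | tmul x u =>
    have : ∑ k, g u k • f (Pi.single k 1) = u := by
      calc ∑ k, g u k • f (Pi.single k 1) = f (∑ k, Pi.single k (g u k)) := by
            rw [map_sum]
            refine Finset.sum_congr rfl fun k _ => ?_
            rw [← map_smul, ← Pi.single_smul, smul_eq_mul, mul_one]
        _ = u := by
            rw [Finset.univ_sum_single]
            exact LinearMap.congr_fun hfg u
    conv_rhs => rw [← this, TensorProduct.tmul_sum]
    simp

lemma HomLattice.of_inFilt {Λ : Type} {Δ : Λ → Type}
    [∀ l, AddCommGroup (Δ l)] [∀ l, Module R (Δ l)] [∀ l, Module A (Δ l)]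
    [∀ l, IsScalarTower R A (Δ l)] {S : Set Λ} {M : Type} [AddCommGroup M] [Module A M]
    (hΔ : ∀ l, HomLattice R A N (Δ l)) (hM : InFilt R A Λ Δ S M) : HomLattice R A N M := by
  obtain ⟨-, n, c, h0, hn, hmono, hfac⟩ := hM
  have key : ∀ i, HomLattice R A N (c i) := by
    intro i
    induction i using Fin.induction with
    | zero =>
      rw [h0]
      exact .of_sum_factor (ι := Empty) (Z := fun _ => PUnit) (fun k => k.elim) (fun k => k.elim)
        (fun x => Subsingleton.elim _ _) fun k => k.elim
    | succ i ih =>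
      obtain ⟨F⟩ := hfac i
      have := F.fin
      have := F.proj
      refine .of_exact (f := Submodule.inclusion (hmono i.castSucc_lt_succ.le))
        (Submodule.inclusion_injective _) (Submodule.mkQ_surjective _) ?_ ih
        (.of_linearEquiv F.iso ((hΔ F.lam).tensor F.U))
      rw [LinearMap.exact_iff, Submodule.ker_mkQ, Submodule.range_inclusion]
  have := key (Fin.last n)
  rw [hn] at this
  exact this.of_linearEquiv Submodule.topEquiv.symm

end HomLattice

section Costandard

variable {R : Type} [CommRing R] {A : Type} [Ring A] [Algebra R A]
  {Λ : Type} [PartialOrder Λ]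
  {Δ : Λ → Type} [∀ l, AddCommGroup (Δ l)] [∀ l, Module R (Δ l)]
  [∀ l, Module A (Δ l)] [∀ l, IsScalarTower R A (Δ l)]
  {Nb : Λ → Type} [∀ l, AddCommGroup (Nb l)] [∀ l, Module R (Nb l)]
  [∀ l, Module A (Nb l)] [∀ l, IsScalarTower R A (Nb l)]

lemma IsCostandard.homLattice_standard (hc : IsCostandard R A Λ Δ Nb) (l m : Λ) :
    HomLattice R A (Nb m) (Δ l) := by
  obtain ⟨-, hiso, hzero, hext⟩ := hc
  have hx := (extVanish_succ_iff 0).1 (hext l m 1 one_pos)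
  by_cases hlm : l = m
  · subst hlm
    obtain ⟨e⟩ := hiso l
    exact ⟨hx, .equiv e.symm, .of_equiv e.symm⟩
  · have : Subsingleton (Δ l →ₗ[A] Nb m) :=
      ⟨fun f g => (hzero l m hlm f).trans (hzero l m hlm g).symm⟩
    exact ⟨hx, inferInstance, inferInstance⟩

lemma IsCostandard.homLattice_self [Fintype Λ] (h : SplitQH R A Λ Δ)
    (hc : IsCostandard R A Λ Δ Nb) (m : Λ) :
    HomLattice R A (Nb m) A := by
  obtain ⟨n, i, p, hip⟩ := h.add_gen (ModuleCat.of A A) inferInstance inferInstance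
  refine .of_split i p hip (.pi fun _ => .pi fun l => ?_)
  refine .of_exact (f := (LinearMap.ker (h.epi l)).subtype) (Submodule.subtype_injective _)
    (h.epi_surj l) (LinearMap.exact_subtype_ker_map _)
    (.of_inFilt (hc.homLattice_standard · m) (h.ker_filt l)) (hc.homLattice_standard l m)

lemma IsCostandard.finite [Fintype Λ] (h : SplitQH R A Λ Δ) (hc : IsCostandard R A Λ Δ Nb) (m : Λ) :
    Module.Finite R (Nb m) :=
  have := (hc.homLattice_self h m).finite
  .equiv (LinearMap.ringLmapEquivSelf A R (Nb m))

lemma IsCostandard.projective [Fintype Λ] (h : SplitQH R A Λ Δ) (hc : IsCostandard R A Λ Δ Nb) (m : Λ) :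
    Module.Projective R (Nb m) :=
  have := (hc.homLattice_self h m).projective
  .of_equiv (LinearMap.ringLmapEquivSelf A R (Nb m))

end Costandard

section DoubleDual

/-- Gives the usual scalar action on a double dual precedence over the one which twists the
`Rᵐᵒᵖ`-action on the dual. -/
local instance dualModuleScalar (R M : Type) [CommRing R] [AddCommGroup M] [Module R M] :
    Module R (M →ₗ[R] R) := LinearMap.module

variable (R : Type) [CommRing R] (A : Type) [Ring A] [Algebra R A]
  (M : Type) [AddCommGroup M] [Module R M] [Module A M] [IsScalarTower R A M]

/-- A finitely generated projective `R`-module with an `A`-action is `A`-isomorphic to the dual of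
its dual. -/
def doubleDualEquiv [Module.Finite R M] [Module.Projective R M] :
    M ≃ₗ[A] ((M →ₗ[R] R) →ₗ[R] R) :=
  .ofBijective
    { toFun := Module.Dual.eval R M
      map_add' := map_add _
      map_smul' := fun _ _ => rfl }
    (Module.bijective_dual_eval R M)

variable {A M} in
/-- Postcomposition with an `A`-linear equivalence, as an `R`-linear equivalence. -/
def homCongrRight (X : Type) [AddCommGroup X] [Module A X] {N : Type} [AddCommGroup N] [Module R N]
    [Module A N] [IsScalarTower R A N] (e : M ≃ₗ[A] N) : (X →ₗ[A] M) ≃ₗ[R] (X →ₗ[A] N) where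
  toFun f := e.toLinearMap.comp f
  invFun f := e.symm.toLinearMap.comp f
  map_add' f g := by ext; simp
  map_smul' r f := by ext x; exact (e.toLinearMap.restrictScalars R).map_smul r (f x)
  left_inv f := by ext; simp
  right_inv f := by ext; simp

/-- For `M` finitely generated projective over `R`, maps into `M` are dual to maps out of the dual
of `M`. -/
def homDualDualEquiv (X : Type) [AddCommGroup X] [Module R X] [Module A X] [IsScalarTower R A X]
    [Module.Finite R M] [Module.Projective R M] :
    ((M →ₗ[R] R) →ₗ[Aᵐᵒᵖ] (X →ₗ[R] R)) ≃ₗ[R] (X →ₗ[A] M) :=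
  (homDualFlip R X (M →ₗ[R] R)).trans (homCongrRight R X (doubleDualEquiv R A M)).symm

lemma subsingleton_ext_dual_dual [Module.Projective R A] (n : ℕ)
    (X : Type) [AddCommGroup X] [Module R X] [Module A X] [IsScalarTower R A X]
    [Module.Projective R X] [Module.Finite R M] [Module.Projective R M]
    (h : Subsingleton (Abelian.Ext (ModuleCat.of A X) (ModuleCat.of A M) (n + 1))) :
    Subsingleton (Abelian.Ext (ModuleCat.of Aᵐᵒᵖ (M →ₗ[R] R)) (ModuleCat.of Aᵐᵒᵖ (X →ₗ[R] R))
      (n + 1)) := by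
  have : Module.Projective R (M →ₗ[R] R) := inferInstanceAs (Module.Projective R (Module.Dual R M))
  refine subsingleton_ext_dual R n _ X ?_
  let e := (doubleDualEquiv R A M).toModuleIso
  refine ⟨fun a b => ?_⟩
  have key : ∀ a : Abelian.Ext (ModuleCat.of A X) (ModuleCat.of A ((M →ₗ[R] R) →ₗ[R] R)) (n + 1),
      (a.comp (Abelian.Ext.mk₀ e.inv) (add_zero _)).comp (Abelian.Ext.mk₀ e.hom) (add_zero _)
        = a := by
    intro a
    simp
  rw [← key a, ← key b, Subsingleton.elim (a.comp (Abelian.Ext.mk₀ e.inv) (add_zero _))]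

end DoubleDual

section Transport

variable {R : Type} [CommRing R] {A B : Type} [Ring A] [Algebra R A] [Ring B] [Algebra R B]
  {σ : A →+* B} {σ' : B →+* A} [RingHomInvPair σ σ'] [RingHomInvPair σ' σ]

/-- Restriction of scalars along an isomorphism of rings, as a semilinear equivalence. -/
def restrictScalarsEquiv (σ : A →+* B) (σ' : B →+* A) [RingHomInvPair σ σ'] [RingHomInvPair σ' σ]
    (M : ModuleCat.{0} A) : M ≃ₛₗ[σ] (ModuleCat.restrictScalars σ').obj M where
  toFun m := m
  invFun m := m
  left_inv _ := rfl
  right_inv _ := rfl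
  map_add' _ _ := rfl
  map_smul' a m := by
    change a • m = σ' (σ a) • m
    rw [RingHomInvPair.comp_apply_eq]

/-- Semilinear equivalences between the factors give one between the products. -/
def semilinearPi {ι : Type} {M M' : ι → Type} [∀ k, AddCommGroup (M k)] [∀ k, Module A (M k)]
    [∀ k, AddCommGroup (M' k)] [∀ k, Module B (M' k)] (u : ∀ k, M k ≃ₛₗ[σ] M' k) :
    (∀ k, M k) ≃ₛₗ[σ] (∀ k, M' k) where
  toFun x k := u k (x k)
  invFun y k := (u k).symm (y k)
  left_inv x := by ext; simp
  right_inv y := by ext; simp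
  map_add' x y := by ext; simp
  map_smul' a x := by ext k; exact (u k).map_smulₛₗ a (x k)

variable {M M' : Type} [AddCommGroup M] [Module A M] [AddCommGroup M'] [Module B M']

lemma InAdd.map {T T' : Type} [AddCommGroup T] [Module A T] [AddCommGroup T'] [Module B T']
    (t : T ≃ₛₗ[σ] T') (u : M ≃ₛₗ[σ] M') (h : InAdd A T M) : InAdd B T' M' := by
  obtain ⟨n, i, p, hip⟩ := h
  let v : (Fin n → T) ≃ₛₗ[σ] (Fin n → T') := semilinearPi fun _ => t
  refine ⟨n, (v.toLinearMap.comp i).comp u.symm.toLinearMap,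
    (u.toLinearMap.comp p).comp v.symm.toLinearMap, ?_⟩
  ext x
  have := LinearMap.congr_fun hip (u.symm x)
  simpa [LinearMap.comp_apply] using (congrArg u this).trans (u.apply_symm_apply x)

section Scalar

variable [Module R M] [IsScalarTower R A M] [Module R M'] [IsScalarTower R B M']

/-- A semilinear equivalence over an isomorphism of `R`-algebras is `R`-linear. -/
def restrictBase (hσ : ∀ r, σ (algebraMap R A r) = algebraMap R B r) (u : M ≃ₛₗ[σ] M') :
    M ≃ₗ[R] M' where
  __ := u
  map_smul' r m := by
    change u (r • m) = r • u m
    rw [← algebraMap_smul A r m, map_smulₛₗ, hσ, algebraMap_smul]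

/-- Tensoring a semilinear equivalence with an `R`-module. -/
def semilinearTensor (hσ : ∀ r, σ (algebraMap R A r) = algebraMap R B r) (u : M ≃ₛₗ[σ] M')
    (U : Type) [AddCommGroup U] [Module R U] : (M ⊗[R] U) ≃ₛₗ[σ] (M' ⊗[R] U) where
  __ := TensorProduct.congr (restrictBase hσ u) (LinearEquiv.refl R U)
  map_smul' a t := by
    change TensorProduct.congr (restrictBase hσ u) (LinearEquiv.refl R U) (a • t) =
      σ a • TensorProduct.congr (restrictBase hσ u) (LinearEquiv.refl R U) t
    induction t with
    | zero => simp
    | add x y hx hy => simp only [smul_add, map_add, hx, hy]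
    | tmul x y =>
      simp only [TensorProduct.smul_tmul', TensorProduct.congr_tmul]
      congr 1
      exact u.map_smulₛₗ a x

/-- Conjugation by a semilinear equivalence. -/
def endTransport (hσ : ∀ r, σ (algebraMap R A r) = algebraMap R B r) (u : M ≃ₛₗ[σ] M') :
    Module.End A M ≃ₐ[R] Module.End B M' :=
  AlgEquiv.ofLinearEquiv
    { toFun := fun f => (u.toLinearMap.comp f).comp u.symm.toLinearMap
      invFun := fun f => (u.symm.toLinearMap.comp f).comp u.toLinearMap
      left_inv := fun f => by ext; simp
      right_inv := fun f => by ext; simp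
      map_add' := fun f g => by ext; simp
      map_smul' := fun r f => by ext x; exact (restrictBase hσ u).map_smul r _ }
    (by ext; simp) (fun f g => by ext; simp)

end Scalar

variable {Λ : Type}
  {Δ : Λ → Type} [∀ l, AddCommGroup (Δ l)] [∀ l, Module R (Δ l)]
  [∀ l, Module A (Δ l)] [∀ l, IsScalarTower R A (Δ l)]
  {Δ' : Λ → Type} [∀ l, AddCommGroup (Δ' l)] [∀ l, Module R (Δ' l)]
  [∀ l, Module B (Δ' l)] [∀ l, IsScalarTower R B (Δ' l)]

/-- Transport of a tensor factor along semilinear equivalences. -/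
def TensorFactor.map (hσ : ∀ r, σ (algebraMap R A r) = algebraMap R B r)
    (φ : ∀ l, Δ l ≃ₛₗ[σ] Δ' l) {S : Set Λ} (u : M ≃ₛₗ[σ] M') (F : TensorFactor R A Λ Δ S M) :
    TensorFactor R B Λ Δ' S M' where
  lam := F.lam
  mem := F.mem
  U := F.U
  fin := F.fin
  proj := F.proj
  iso := (u.symm.trans F.iso).trans (semilinearTensor hσ (φ F.lam) F.U)

lemma InFilt.map (hσ : ∀ r, σ (algebraMap R A r) = algebraMap R B r)
    (φ : ∀ l, Δ l ≃ₛₗ[σ] Δ' l) {S : Set Λ} (u : M ≃ₛₗ[σ] M') (h : InFilt R A Λ Δ S M) :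
    InFilt R B Λ Δ' S M' := by
  obtain ⟨hfin, n, c, h0, hn, hmono, hfac⟩ := h
  refine ⟨.of_surjective u.toLinearMap u.surjective, n, fun i => (c i).map u.toLinearMap,
    by simp [h0], by simp [hn], fun i j hij => Submodule.map_mono (hmono hij), fun i => ?_⟩
  obtain ⟨F⟩ := hfac i
  refine ⟨F.map hσ φ (Submodule.Quotient.equiv _ _ (u.submoduleMap (c i.succ)) ?_)⟩
  ext ⟨y, hy⟩
  constructor
  · rintro ⟨x, hx, hxy⟩
    exact ⟨x, hx, congrArg Subtype.val hxy⟩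
  · rintro ⟨x, hx, rfl⟩
    exact ⟨⟨x, hmono i.castSucc_lt_succ.le hx⟩, hx, rfl⟩

/-- Transport of a split quasi-hereditary structure along an isomorphism of `R`-algebras. -/
def SplitQH.map [Fintype Λ] [PartialOrder Λ]
    (hσ : ∀ r, σ (algebraMap R A r) = algebraMap R B r)
    (φ : ∀ l, Δ l ≃ₛₗ[σ] Δ' l) (h : SplitQH R A Λ Δ) : SplitQH R B Λ Δ' :=
  let e : A ≃ₗ[R] B :=
    { RingHomInvPair.toRingEquiv σ σ' with
      map_smul' := fun r a => by
        change σ (r • a) = r • σ a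
        rw [Algebra.smul_def, map_mul, hσ, ← Algebra.smul_def] }
  { algFin := have := h.algFin; .equiv e
    algProj := have := h.algProj; .of_equiv e
    deltaFinA := fun l => have := h.deltaFinA l; .of_surjective (φ l).toLinearMap (φ l).surjective
    deltaFinR := fun l => have := h.deltaFinR l; .equiv (restrictBase hσ (φ l))
    deltaProjR := fun l => have := h.deltaProjR l; .of_equiv (restrictBase hσ (φ l))
    hom_le := by
      rintro l m ⟨f, hf⟩
      refine h.hom_le l m ⟨((φ m).symm.toLinearMap.comp f).comp (φ l).toLinearMap, fun h0 => hf ?_⟩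
      ext x
      simpa using LinearMap.congr_fun h0 ((φ l).symm x)
    endIso := fun l => (h.endIso l).map fun k => (endTransport hσ (φ l)).symm.trans k
    P := fun l => (ModuleCat.restrictScalars σ').obj (h.P l)
    P_proj := fun l => have := h.P_proj l; .of_equiv (restrictScalarsEquiv σ σ' (h.P l))
    P_fin := fun l =>
      have := h.P_fin l
      .of_surjective (restrictScalarsEquiv σ σ' (h.P l)).toLinearMap
        (restrictScalarsEquiv σ σ' (h.P l)).surjective
    epi := fun l => ((φ l).toLinearMap.comp (h.epi l)).comp
      (restrictScalarsEquiv σ σ' (h.P l)).symm.toLinearMap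
    epi_surj := fun l => (φ l).surjective.comp
      ((h.epi_surj l).comp (restrictScalarsEquiv σ σ' (h.P l)).symm.surjective)
    ker_filt := fun l => (h.ker_filt l).map hσ φ
      (((restrictScalarsEquiv σ σ' (h.P l)).submoduleMap (LinearMap.ker (h.epi l))).trans
        (LinearEquiv.ofEq _ _ (by
          ext x
          rw [Submodule.mem_map_equiv]
          simp)))
    add_gen := fun Q hfin hproj =>
      let q := restrictScalarsEquiv σ' σ Q
      (h.add_gen _ (.of_surjective q.toLinearMap q.surjective) (.of_equiv q)).map
        (semilinearPi fun l => restrictScalarsEquiv σ σ' (h.P l)) q.symm }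

end Transport

section DoubleDualAlgebra

attribute [local instance] dualModuleScalar

variable {R : Type} [CommRing R] {A : Type} [Ring A] [Algebra R A]

local instance : RingHomInvPair (RingEquiv.opOp A : A →+* Aᵐᵒᵖᵐᵒᵖ) (RingEquiv.opOp A).symm :=
  .of_ringEquiv _

local instance : RingHomInvPair ((RingEquiv.opOp A).symm : Aᵐᵒᵖᵐᵒᵖ →+* A) (RingEquiv.opOp A) :=
  .of_ringEquiv_symm _

/-- The double duals of the standard modules are standard modules over the double opposite
algebra. -/
def SplitQH.mapDoubleDual {Λ : Type} [Fintype Λ] [PartialOrder Λ]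
    {Δ : Λ → Type} [∀ l, AddCommGroup (Δ l)] [∀ l, Module R (Δ l)]
    [∀ l, Module A (Δ l)] [∀ l, IsScalarTower R A (Δ l)] (h : SplitQH R A Λ Δ) :
    SplitQH R Aᵐᵒᵖᵐᵒᵖ Λ (fun l => ((Δ l →ₗ[R] R) →ₗ[R] R)) :=
  have := h.deltaFinR
  have := h.deltaProjR
  h.map (σ := (RingEquiv.opOp A : A →+* Aᵐᵒᵖᵐᵒᵖ)) (fun _ => rfl) fun l =>
    .ofBijective
      { toFun := Module.Dual.eval R (Δ l)
        map_add' := map_add _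
        map_smul' := fun _ _ => rfl }
      (Module.bijective_dual_eval R (Δ l))

end DoubleDualAlgebra

/-- If `(A, {Δ(λ)})` is split quasi-hereditary with costandard modules
`{Nb(λ)}`, then the duals `{DΔ(λ)}` are costandard modules for the split quasi-hereditary
algebra `(A^op, {DNb(λ)})`. -/
theorem dual_standard_is_costandard
    (R : Type) [CommRing R] [IsNoetherianRing R]
    (A : Type) [Ring A] [Algebra R A]
    (Λ : Type) [Fintype Λ] [PartialOrder Λ]
    (Δ : Λ → Type) [∀ l, AddCommGroup (Δ l)] [∀ l, Module R (Δ l)]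
    [∀ l, Module A (Δ l)] [∀ l, IsScalarTower R A (Δ l)]
    (Nb : Λ → Type) [∀ l, AddCommGroup (Nb l)] [∀ l, Module R (Nb l)]
    [∀ l, Module A (Nb l)] [∀ l, IsScalarTower R A (Nb l)]
    (h : SplitQH R A Λ Δ) (hc : IsCostandard R A Λ Δ Nb) :
    IsCostandard R Aᵐᵒᵖ Λ (fun l => (Nb l →ₗ[R] R)) (fun l => (Δ l →ₗ[R] R)) := by
  have := h.algProj
  have := h.deltaFinR
  have := h.deltaProjR
  have := hc.finite h
  have := hc.projective h
  refine ⟨⟨h.mapDoubleDual⟩, fun l => ?_, fun l m hlm f => ?_, fun l m i hi => ?_⟩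
  · exact (hc.2.1 l).map fun e => (homDualDualEquiv R A (Nb l) (Δ l)).trans e
  · apply (homDualDualEquiv R A (Nb l) (Δ m)).injective
    rw [map_zero]
    exact hc.2.2.1 m l hlm.symm _
  · obtain ⟨n, rfl⟩ := Nat.exists_eq_succ_of_ne_zero hi.ne'
    exact (extVanish_succ_iff n).2 <| subsingleton_ext_dual_dual R A (Nb l) n (Δ m) <|
      (extVanish_succ_iff n).1 (hc.2.2.2 m l _ hi)

end
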